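/- Let G = (V, →, c) be a game where V is a countable set of vertices partitioned into demonic vertices V_D and angelic vertices V_A, → ⊆ V × V is finitely branching, and c : V → ℕ. Let Γ : ℕ∞^V → ℕ∞^V be defined by Γ(f)(v) = max{c(v), max{f(u) : v → u}} for v ∈ V_D and Γ(f)(v) = max{c(v), min{f(u) : v → u}} for v ∈ V_A (where max/min over the empty set of successors is taken so that Γ(f)(v) = c(v) for terminal v). Then Γ has a least fixed point μΓ, and for every vertex v̂ ∈ V, μΓ(v̂) = sup_π inf_σ mmax[c](α^{σ,π}) = inf_σ sup_π mmax[c](α^{σ,π}), where π ranges over Demon strategies and σ over Angel strategies for initial vertex v̂. -/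

import Mathlib

/-!
The operator `Γ` is monotone on a complete lattice, so it has a least fixed point `μ` that lies
below every pre-fixed point. The value identities follow from the cycle
`μ ≤ sup inf ≤ inf sup ≤ μ`, whose middle inequality holds in every complete lattice.

* `inf sup ≤ μ` (`iInf_iSup_le_of_fixed`): Angel always moves to a successor with minimal `μ`.
  Then `μ` does not increase along the play, and it bounds the cost of every visited vertex.
* `μ ≤ sup inf` (`Gamma_lowerValue_le`): the lower value is a pre-fixed point of `Γ`. At a demonic
  vertex Demon moves to any chosen successor and continues with a strategy for it; at an angelic
  vertex Demon waits for the move and continues with a strategy for the vertex reached. In the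
  angelic case the supremum over Demon strategies need not be attained, so one argues with finite
  thresholds `k`, each of which is secured by a single strategy at every successor.
-/


open scoped Classical

namespace VassPaperGames

noncomputable section

/-- A game `G = (V, →, c)`: a countable set of vertices partitioned into demonic and angelic
ones (via the predicate `demonic`), a finitely-branching transition relation, and a cost
function. -/
structure CGame where
  V : Type
  [cnt : Countable V]
  demonic : V → Prop
  R : V → V → Prop
  finBranch : ∀ v : V, {u | R v u}.Finite
  cost : V → ℕ

attribute [instance] CGame.cnt

/-- A strategy for the player owning the vertices in `own`: it assigns to every finite path
(represented by its strict past `h` and current vertex `v`) a successor of `v`, whenever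
`v` has at least one successor. -/
structure GStrategy (G : CGame) (own : G.V → Prop) where
  choose : List G.V → G.V → G.V
  choose_succ : ∀ h v, own v → (∃ u, G.R v u) → G.R v (choose h v)

abbrev GAngelStrategy (G : CGame) := GStrategy G (fun v => ¬ G.demonic v)
abbrev GDemonStrategy (G : CGame) := GStrategy G G.demonic

/-- The maximal path `α^{σ,π}` from `init`: `gplayAux σ π init n` is (the history together
with) the `n`-th vertex, or `none` if the path has already ended (in a vertex without
successors). -/
def gplayAux {G : CGame} (σ : GAngelStrategy G) (π : GDemonStrategy G) (init : G.V) :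
    ℕ → Option (List G.V × G.V)
  | 0 => some ([], init)
  | n+1 => (gplayAux σ π init n).bind fun hv =>
      if ∃ u, G.R hv.2 u then
        some (hv.1 ++ [hv.2],
          if G.demonic hv.2 then π.choose hv.1 hv.2 else σ.choose hv.1 hv.2)
      else none

/-- `mmax[c](α^{σ,π})`: the supremum of the costs of the vertices visited by the maximal
path `α^{σ,π}` from `init`. -/
def gmmax {G : CGame} (σ : GAngelStrategy G) (π : GDemonStrategy G) (init : G.V) : ℕ∞ :=
  ⨆ v ∈ {v : G.V | ∃ n h, gplayAux σ π init n = some (h, v)}, ((G.cost v : ℕ) : ℕ∞)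

/-- The Bellman operator `Γ`: `Γ(f)(v) = max{c(v), max/min of f over the successors of v}`
(demonic: max, angelic: min), with `Γ(f)(v) = c(v)` for terminal `v`. -/
def Gamma (G : CGame) (f : G.V → ℕ∞) : G.V → ℕ∞ := fun v =>
  if ∃ u, G.R v u then
    ((G.cost v : ℕ) : ℕ∞) ⊔
      (if G.demonic v then ⨆ u ∈ {u | G.R v u}, f u else ⨅ u ∈ {u | G.R v u}, f u)
  else ((G.cost v : ℕ) : ℕ∞)

/-- A memoryless (positional) strategy: its choice depends only on the current vertex. -/
def GMemoryless {G : CGame} {own : G.V → Prop} (s : GStrategy G own) : Prop :=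
  ∀ h h' v, s.choose h v = s.choose h' v


/-! ### Basic facts -/

theorem Gamma_mono (G : CGame) : Monotone (Gamma G) := by
  intro f g hfg v
  unfold Gamma
  split_ifs
  · exact sup_le_sup le_rfl (iSup₂_mono fun u _ => hfg u)
  · exact sup_le_sup le_rfl (iInf₂_mono fun u _ => hfg u)
  · exact le_rfl

theorem cost_le_Gamma (G : CGame) (f : G.V → ℕ∞) (v : G.V) : (G.cost v : ℕ∞) ≤ Gamma G f v := by
  unfold Gamma
  split_ifs
  · exact le_sup_left
  · exact le_sup_left
  · exact le_rfl

theorem exists_strategy (G : CGame) (own : G.V → Prop) : Nonempty (GStrategy G own) :=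
  ⟨{ choose := fun _ v => if h : ∃ u, G.R v u then h.choose else v
     choose_succ := by
      intro _ v _ hs
      simp only [dif_pos hs]
      exact hs.choose_spec }⟩

theorem cost_le_gmmax {G : CGame} {σ : GAngelStrategy G} {π : GDemonStrategy G} {init : G.V}
    {n : ℕ} {h : List G.V} {v : G.V} (hp : gplayAux σ π init n = some (h, v)) :
    (G.cost v : ℕ∞) ≤ gmmax σ π init :=
  le_iSup₂_of_le v ⟨n, h, hp⟩ le_rfl

/-! ### The upper bound: a minimizing strategy for Angel -/

/-- Angel has a strategy that always moves to a successor minimizing `f`; the minimum is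
attained because `ℕ∞` is well-ordered. -/
theorem exists_min_strategy (G : CGame) (f : G.V → ℕ∞) :
    ∃ σ : GAngelStrategy G, ∀ h v, (∃ u, G.R v u) →
      ∀ u, G.R v u → f (σ.choose h v) ≤ f u := by
  have key : ∀ v : G.V, ∃ w, (∃ u, G.R v u) → G.R v w ∧ ∀ u, G.R v u → f w ≤ f u := by
    intro v
    by_cases hs : ∃ u, G.R v u
    · obtain ⟨w, hw, hmin⟩ := exists_minimalFor_of_wellFoundedLT (G.R v) f hs
      exact ⟨w, fun _ => ⟨hw, fun u hu => (le_total (f w) (f u)).elim id (hmin hu)⟩⟩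
    · exact ⟨v, fun h => absurd h hs⟩
  choose s hs using key
  exact ⟨⟨fun _ v => s v, fun _ v _ h => (hs v h).1⟩, fun _ v h => (hs v h).2⟩

/-- Every fixed point of `Γ`, not just the least one, bounds the upper value: if Angel always
minimizes `f`, then `f` never increases along a play, and `f` dominates the cost everywhere. -/
theorem iInf_iSup_le_of_fixed (G : CGame) (f : G.V → ℕ∞) (hf : Gamma G f = f) (init : G.V) :
    (⨅ σ : GAngelStrategy G, ⨆ π : GDemonStrategy G, gmmax σ π init) ≤ f init := by
  obtain ⟨σ, hσ⟩ := exists_min_strategy G f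
  refine iInf_le_of_le σ (iSup_le fun π => iSup₂_le ?_)
  have inv : ∀ n h v, gplayAux σ π init n = some (h, v) → f v ≤ f init := by
    intro n
    induction n with
    | zero =>
      intro h v hp
      simp only [gplayAux, Option.some.injEq, Prod.mk.injEq] at hp
      rw [hp.2]
    | succ n ih =>
      intro h v hp
      rw [gplayAux, Option.bind_eq_some_iff] at hp
      obtain ⟨⟨h', w⟩, hw, hp⟩ := hp
      refine le_trans ?_ (ih h' w hw)
      by_cases hs : ∃ u, G.R w u
      · simp only [if_pos hs, Option.some.injEq, Prod.mk.injEq] at hp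
        obtain ⟨-, rfl⟩ := hp
        conv_rhs => rw [← hf]
        rw [Gamma, if_pos hs]
        refine le_trans ?_ le_sup_right
        by_cases hd : G.demonic w
        · simp only [if_pos hd]
          exact le_iSup₂_of_le (f := fun u (_ : u ∈ {u | G.R w u}) => f u) _
            (π.choose_succ h' w hd hs) le_rfl
        · simp only [if_neg hd]
          exact le_iInf₂ fun u hu => hσ h' w hs u hu
      · simp [if_neg hs] at hp
  rintro v ⟨n, h, hp⟩
  refine le_trans ?_ (inv n h v hp)
  conv_rhs => rw [← hf]
  exact cost_le_Gamma G f v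

/-! ### The lower bound: composing strategies for Demon -/

/-- The strategy induced by `s` on the rest of the play after a first visit to `v`. -/
def shift {G : CGame} {own : G.V → Prop} (s : GStrategy G own) (v : G.V) : GStrategy G own where
  choose h w := s.choose (v :: h) w
  choose_succ h w := s.choose_succ (v :: h) w

/-- After its first step, the play from `v` is the play of the shifted strategies from the second
vertex, with `v` prepended to the histories. -/
theorem gplayAux_succ_shift {G : CGame} (σ : GAngelStrategy G) (π : GDemonStrategy G) (v : G.V)
    (hs : ∃ u, G.R v u) (n : ℕ) :
    gplayAux σ π v (n + 1) =
      (gplayAux (shift σ v) (shift π v)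
        (if G.demonic v then π.choose [] v else σ.choose [] v) n).map
          fun p => (v :: p.1, p.2) := by
  induction n with
  | zero => simp [gplayAux, if_pos hs]
  | succ n ih =>
    rw [gplayAux, ih, gplayAux]
    cases gplayAux (shift σ v) (shift π v)
        (if G.demonic v then π.choose [] v else σ.choose [] v) n with
    | none => rfl
    | some p =>
      by_cases hp : ∃ u, G.R p.2 u
      · simp only [Option.map_some, Option.bind_some, if_pos hp]
        rfl
      · simp only [Option.map_some, Option.bind_some, if_neg hp, Option.map_none]

theorem gmmax_shift_le {G : CGame} (σ : GAngelStrategy G) (π : GDemonStrategy G) (v : G.V)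
    (hs : ∃ u, G.R v u) :
    gmmax (shift σ v) (shift π v) (if G.demonic v then π.choose [] v else σ.choose [] v)
      ≤ gmmax σ π v := by
  refine iSup₂_le ?_
  rintro w ⟨n, h, hp⟩
  refine cost_le_gmmax (n := n + 1) (h := v :: h) ?_
  rw [gplayAux_succ_shift σ π v hs, hp]
  rfl

/-- A play from `u` only consults a strategy on paths that start in `u`. -/
theorem gmmax_congr {G : CGame} (σ : GAngelStrategy G) (π π' : GDemonStrategy G) (u : G.V)
    (hag : ∀ h w, (h ++ [w]).head? = some u → π.choose h w = π'.choose h w) :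
    gmmax σ π u = gmmax σ π' u := by
  have key : ∀ n, gplayAux σ π u n = gplayAux σ π' u n ∧
      ∀ h w, gplayAux σ π u n = some (h, w) → (h ++ [w]).head? = some u := by
    intro n
    induction n with
    | zero =>
      refine ⟨rfl, fun h w hp => ?_⟩
      simp only [gplayAux, Option.some.injEq, Prod.mk.injEq] at hp
      obtain ⟨rfl, rfl⟩ := hp
      rfl
    | succ n ih =>
      obtain ⟨heq, hhead⟩ := ih
      rw [gplayAux, gplayAux, ← heq]
      cases hq : gplayAux σ π u n with
      | none => simp
      | some p =>
        have hp := hhead p.1 p.2 hq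
        refine ⟨by simp only [Option.bind_some, hag p.1 p.2 hp], fun h w hw => ?_⟩
        by_cases hs : ∃ x, G.R p.2 x
        · simp only [Option.bind_some, if_pos hs, Option.some.injEq, Prod.mk.injEq] at hw
          obtain ⟨rfl, -⟩ := hw
          rw [List.head?_append, hp]
          rfl
        · simp [if_neg hs] at hw
  simp only [gmmax, fun n => (key n).1]

/-- The lower value `sup_π inf_σ mmax[c](α^{σ,π})` of the game, as a function of the initial
vertex. -/
def lowerValue (G : CGame) (v : G.V) : ℕ∞ :=
  ⨆ π : GDemonStrategy G, ⨅ σ : GAngelStrategy G, gmmax σ π v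

theorem cost_le_lowerValue (G : CGame) (v : G.V) : (G.cost v : ℕ∞) ≤ lowerValue G v := by
  obtain ⟨π⟩ := exists_strategy G G.demonic
  exact le_iSup_of_le π (le_iInf fun σ => cost_le_gmmax (n := 0) (h := []) rfl)

/-- A finite lower bound on the lower value is secured by a single Demon strategy, even if the
supremum itself is not attained. -/
theorem exists_strategy_of_le_lowerValue {G : CGame} {v : G.V} {k : ℕ}
    (hk : (k : ℕ∞) ≤ lowerValue G v) :
    ∃ π : GDemonStrategy G, ∀ σ : GAngelStrategy G, (k : ℕ∞) ≤ gmmax σ π v := by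
  cases k with
  | zero =>
    obtain ⟨π⟩ := exists_strategy G G.demonic
    exact ⟨π, fun σ => by simp⟩
  | succ m =>
    have hm : (m : ℕ∞) < lowerValue G v :=
      lt_of_lt_of_le (by exact_mod_cast Nat.lt_succ_self m) hk
    obtain ⟨π, hπ⟩ := lt_iSup_iff.1 hm
    refine ⟨π, fun σ => ?_⟩
    push_cast
    exact Order.add_one_le_of_lt (lt_of_lt_of_le hπ (iInf_le _ σ))

/-- At a demonic vertex, Demon may move to any successor `u` and continue as from `u`. -/
theorem lowerValue_le_of_demonic {G : CGame} {v u : G.V} (hd : G.demonic v) (hu : G.R v u) :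
    lowerValue G u ≤ lowerValue G v := by
  refine iSup_le fun π => ?_
  let ρ : GDemonStrategy G :=
    { choose := fun h w =>
        match h with
        | [] => if w = v then u else π.choose [] w
        | _ :: h' => π.choose h' w
      choose_succ := by
        rintro (_ | ⟨x, h'⟩) w hw hs
        · by_cases hwv : w = v
          · subst hwv
            simpa using hu
          · simpa [hwv] using π.choose_succ [] w hw hs
        · exact π.choose_succ h' w hw hs }
  refine le_iSup_of_le ρ (le_iInf fun σ => iInf_le_of_le (shift σ v) ?_)
  have h := gmmax_shift_le σ ρ v ⟨u, hu⟩
  rw [if_pos hd] at h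
  have h1 : ρ.choose [] v = u := if_pos rfl
  rw [h1] at h
  exact h

/-- At an angelic vertex, Demon waits for Angel's move to some `u` and then plays a strategy
good from `u`. -/
theorem le_lowerValue_of_angelic {G : CGame} {v : G.V} (hd : ¬ G.demonic v)
    (hs : ∃ u, G.R v u) {k : ℕ} (hk : ∀ u, G.R v u → (k : ℕ∞) ≤ lowerValue G u) :
    (k : ℕ∞) ≤ lowerValue G v := by
  obtain ⟨π₀⟩ := exists_strategy G G.demonic
  have hex : ∀ u, ∃ π : GDemonStrategy G, G.R v u → ∀ σ, (k : ℕ∞) ≤ gmmax σ π u := by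
    intro u
    by_cases hu : G.R v u
    · obtain ⟨π, hπ⟩ := exists_strategy_of_le_lowerValue (hk u hu)
      exact ⟨π, fun _ => hπ⟩
    · exact ⟨π₀, fun h => absurd h hu⟩
  choose P hP using hex
  -- The second vertex of the path, i.e. Angel's first move, selects the strategy; if the
  -- path `h' ++ [w]` after the initial vertex is `[w]`, that vertex is `w` itself.
  let ρ : GDemonStrategy G :=
    { choose := fun h w =>
        match h with
        | [] => π₀.choose [] w
        | _ :: h' => (P ((h' ++ [w]).head?.getD w)).choose h' w
      choose_succ := by
        rintro (_ | ⟨x, h'⟩) w hw hs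
        · exact π₀.choose_succ [] w hw hs
        · exact (P _).choose_succ h' w hw hs }
  refine le_iSup_of_le ρ (le_iInf fun σ => ?_)
  have h := gmmax_shift_le σ ρ v hs
  rw [if_neg hd] at h
  refine le_trans ?_ h
  rw [gmmax_congr (shift σ v) (shift ρ v) (P (σ.choose [] v)) (σ.choose [] v)]
  · exact hP _ (σ.choose_succ [] v hd hs) _
  · intro h' w hw
    change (P ((h' ++ [w]).head?.getD w)).choose h' w = _
    rw [hw]
    rfl

theorem Gamma_lowerValue_le (G : CGame) : Gamma G (lowerValue G) ≤ lowerValue G := by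
  intro v
  unfold Gamma
  by_cases hs : ∃ u, G.R v u
  · rw [if_pos hs]
    refine sup_le (cost_le_lowerValue G v) ?_
    by_cases hd : G.demonic v
    · rw [if_pos hd]
      exact iSup₂_le fun u hu => lowerValue_le_of_demonic hd hu
    · rw [if_neg hd]
      refine ENat.forall_natCast_le_iff_le.1 fun k hk => ?_
      exact le_lowerValue_of_angelic hd hs fun u hu => hk.trans (iInf₂_le u hu)
  · rw [if_neg hs]
    exact cost_le_lowerValue G v

/-- The Bellman operator `Γ` has a least fixed point `μΓ`, and for every
vertex `v̂`, `μΓ(v̂) = sup_π inf_σ mmax[c](α^{σ,π}) = inf_σ sup_π mmax[c](α^{σ,π})`. -/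
theorem bellman_lfp_value (G : CGame) :
    ∃ μ : G.V → ℕ∞, (Gamma G μ = μ ∧ ∀ g : G.V → ℕ∞, Gamma G g = g → μ ≤ g) ∧
      ∀ vhat : G.V,
        μ vhat = (⨆ π : GDemonStrategy G, ⨅ σ : GAngelStrategy G, gmmax σ π vhat) ∧
        μ vhat = (⨅ σ : GAngelStrategy G, ⨆ π : GDemonStrategy G, gmmax σ π vhat) := by
  let Φ : (G.V → ℕ∞) →o (G.V → ℕ∞) := ⟨Gamma G, Gamma_mono G⟩
  have hfix : Gamma G Φ.lfp = Φ.lfp := Φ.map_lfp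
  refine ⟨Φ.lfp, ⟨hfix, fun g hg => Φ.lfp_le hg.le⟩, fun vhat => ?_⟩
  have h1 : Φ.lfp vhat ≤ ⨆ π : GDemonStrategy G, ⨅ σ : GAngelStrategy G, gmmax σ π vhat :=
    Φ.lfp_le (Gamma_lowerValue_le G) vhat
  have h2 : (⨆ π : GDemonStrategy G, ⨅ σ : GAngelStrategy G, gmmax σ π vhat) ≤
      ⨅ σ : GAngelStrategy G, ⨆ π : GDemonStrategy G, gmmax σ π vhat :=
    iSup_iInf_le_iInf_iSup _
  have h3 := iInf_iSup_le_of_fixed G Φ.lfp hfix vhat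
  exact ⟨le_antisymm h1 (h2.trans h3), le_antisymm (h1.trans h2) h3⟩

end
end VassPaperGames
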